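/- Let n ≥ 1 and ℓ ≤ n, let H_B and H_{R₂} be finite-dimensional, and let ψ ∈ H_A ⊗ H_B ⊗ (H_{R₁} ⊗ H_{R₂}) with H_{R₁} = ℂ^V be a unit vector of the form ψ = ∑_{z∈V} √p_z |z⟩_A ⊗ Ψ_z, where p is a probability distribution on V and Ψ_z ∈ H_B ⊗ H_{R₁} ⊗ H_{R₂} is the image of |φ_z⟩ ⊗ |z⟩ under the canonical isomorphism (H_B ⊗ H_{R₂}) ⊗ H_{R₁} ≅ H_B ⊗ H_{R₁} ⊗ H_{R₂}, for unit vectors |φ_z⟩ ∈ H_B ⊗ H_{R₂} (this expresses the condition H(Z^A|R) = 0, with R = R₁R₂). Let g : V → (ZMod 2)^ℓ be a surjective linear map and 0 ≤ ε ≤ 1, and suppose the hashed X-key is ε-secure against R: D(σ_g^{KR}, 2^{−ℓ} 1_K ⊗ ψ^R) ≤ ε. Then for every surjective linear map f⊥ : V → (ZMod 2)^{n−ℓ} with ker f⊥ = range gᵀ, there exists a family of POVMs (Λ^c_z)_{z∈V} on H_B, one for each c ∈ (ZMod 2)^{n−ℓ}, such that ∑_{z∈V} ⟨ψ| (|z⟩⟨z|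 ⊗ Λ^{f⊥(z)}_z ⊗ 1_R) |ψ⟩ ≥ 1 − √(2ε). -/

import Mathlib

open Matrix BigOperators Finset
open scoped Classical ComplexOrder

noncomputable section

/-- The positive semidefinite square root of a matrix (zero if the matrix is not PSD). -/
def psdSqrt {ι : Type*} [Fintype ι] [DecidableEq ι] (M : Matrix ι ι ℂ) : Matrix ι ι ℂ :=
  if h : M.PosSemidef then
    (h.1.eigenvectorUnitary : Matrix ι ι ℂ) *
      diagonal (fun i => ((Real.sqrt (h.1.eigenvalues i) : ℝ) : ℂ)) *
      (star h.1.eigenvectorUnitary : Matrix ι ι ℂ)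
  else 0

/-- Trace norm ‖M‖₁ = Tr √(M†M). -/
def traceNorm {ι : Type*} [Fintype ι] [DecidableEq ι] (M : Matrix ι ι ℂ) : ℝ :=
  ((psdSqrt (Mᴴ * M)).trace).re

/-- Trace distance D(ρ,σ) = ‖ρ−σ‖₁/2. -/
def traceDist {ι : Type*} [Fintype ι] [DecidableEq ι] (ρ σ : Matrix ι ι ℂ) : ℝ :=
  traceNorm (ρ - σ) / 2

/-- The adjoint fᵀ of a linear map f : (ZMod 2)^n → (ZMod 2)^m with respect to the
standard bilinear forms ⟨u,v⟩ = ∑ i, u i * v i, i.e. the map with ⟨fᵀc, v⟩ = ⟨c, f v⟩. -/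
def adjLin {n m : ℕ}
    (f : ((Fin n → ZMod 2)) →ₗ[ZMod 2] (Fin m → ZMod 2)) :
    ((Fin m → ZMod 2)) →ₗ[ZMod 2] (Fin n → ZMod 2) :=
  Matrix.toLin' (LinearMap.toMatrix' f)ᵀ

/-- Conjugate (X) basis vector of n qubits: |x̃⟩_z = (−1)^{⟨x,z⟩} / 2^{n/2}. -/
def xVecV (n : ℕ) (x z : Fin n → ZMod 2) : ℂ :=
  (-1 : ℂ) ^ ((∑ i, x i * z i : ZMod 2)).val / (Real.sqrt (2 ^ n) : ℂ)

/-- Component of (⟨x̃|⊗1_{BR})|ψ⟩. -/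
def condVecXV {n : ℕ} {β r : Type*} [Fintype β] [Fintype r]
    (ψ : (Fin n → ZMod 2) × β × r → ℂ) (x : Fin n → ZMod 2) (p : β × r) : ℂ :=
  ∑ z, (starRingEnd ℂ) (xVecV n x z) * ψ (z, p.1, p.2)

/-- Unnormalized conditional state ϑ_x^R = Tr_B[(⟨x̃|⊗1)|ψ⟩⟨ψ|(|x̃⟩⊗1)]. -/
def thetaRV {n : ℕ} {β r : Type*} [Fintype β] [Fintype r]
    (ψ : (Fin n → ZMod 2) × β × r → ℂ) (x : Fin n → ZMod 2) : Matrix r r ℂ :=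
  Matrix.of fun s s' => ∑ b, condVecXV ψ x (b, s) * (starRingEnd ℂ) (condVecXV ψ x (b, s'))

/-- Reduced state ψ^R = Tr_{AB}|ψ⟩⟨ψ|. -/
def reducedR {α β r : Type*} [Fintype α] [Fintype β] [Fintype r]
    (ψ : α × β × r → ℂ) : Matrix r r ℂ :=
  Matrix.of fun s s' => ∑ z, ∑ b, ψ (z, b, s) * (starRingEnd ℂ) (ψ (z, b, s'))

/-- The hashed X-key state σ_g^{KR} = ∑_k |k⟩⟨k| ⊗ ∑_{x : g x = k} ϑ_x^R. -/
def keyState {n ℓ : ℕ} {β r : Type*} [Fintype β] [Fintype r]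
    (ψ : (Fin n → ZMod 2) × β × r → ℂ)
    (g : ((Fin n → ZMod 2)) →ₗ[ZMod 2] (Fin ℓ → ZMod 2)) :
    Matrix ((Fin ℓ → ZMod 2) × r) ((Fin ℓ → ZMod 2) × r) ℂ :=
  Matrix.of fun p q =>
    if p.1 = q.1 then ∑ x ∈ Finset.univ.filter (fun x => g x = p.1), thetaRV ψ x p.2 q.2
    else 0

/-- The ideal key state 2^{−ℓ} 1_K ⊗ ψ^R on ℓ key bits. -/
def idealKeyV (ℓ : ℕ) {n : ℕ} {β r : Type*} [Fintype β] [Fintype r]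
    (ψ : (Fin n → ZMod 2) × β × r → ℂ) :
    Matrix ((Fin ℓ → ZMod 2) × r) ((Fin ℓ → ZMod 2) × r) ℂ :=
  Matrix.of fun p q => (if p.1 = q.1 then ((2 : ℂ) ^ ℓ)⁻¹ else 0) * reducedR ψ p.2 q.2

end

section SpectralCalculus

lemma re_trace_conjTranspose_mul_self {ι κ : Type*} [Fintype ι] [Fintype κ] (A : Matrix ι κ ℂ) :
    (Aᴴ * A).trace.re = ∑ i, ∑ j, ‖A i j‖ ^ 2 := by
  rw [Finset.sum_comm]
  simp only [Matrix.trace, Matrix.diag_apply, Matrix.mul_apply, conjTranspose_apply,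
    Complex.re_sum]
  refine Finset.sum_congr rfl fun i _ => Finset.sum_congr rfl fun j _ => ?_
  rw [← Complex.normSq_eq_norm_sq, Complex.normSq_apply]
  simp

variable {ι κ : Type*} [Fintype ι] [DecidableEq ι] [Fintype κ] [DecidableEq κ]

lemma exists_unitary_diagonalization {A : Matrix ι ι ℂ} (hA : A.IsHermitian) :
    ∃ (U : Matrix ι ι ℂ) (d : ι → ℝ), Uᴴ * U = 1 ∧ U * Uᴴ = 1 ∧
      A = U * diagonal (fun i => (d i : ℂ)) * Uᴴ := by
  refine ⟨hA.eigenvectorUnitary, hA.eigenvalues, ?_, ?_, ?_⟩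
  · exact Unitary.coe_star_mul_self hA.eigenvectorUnitary
  · exact Unitary.coe_mul_star_self hA.eigenvectorUnitary
  · conv_lhs => rw [hA.spectral_theorem]
    rfl

lemma Matrix.PosSemidef.exists_unitary_diagonalization {A : Matrix ι ι ℂ} (hA : A.PosSemidef) :
    ∃ (U : Matrix ι ι ℂ) (d : ι → ℝ), (∀ i, 0 ≤ d i) ∧ Uᴴ * U = 1 ∧ U * Uᴴ = 1 ∧
      A = U * diagonal (fun i => (d i : ℂ)) * Uᴴ := by
  refine ⟨hA.1.eigenvectorUnitary, hA.1.eigenvalues, hA.eigenvalues_nonneg, ?_, ?_, ?_⟩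
  · exact Unitary.coe_star_mul_self hA.1.eigenvectorUnitary
  · exact Unitary.coe_mul_star_self hA.1.eigenvectorUnitary
  · conv_lhs => rw [hA.1.spectral_theorem]
    rfl

lemma conj_diagonal_mul {U : Matrix ι ι ℂ} (hU : Uᴴ * U = 1) (a b : ι → ℂ) :
    (U * diagonal a * Uᴴ) * (U * diagonal b * Uᴴ) = U * diagonal (fun i => a i * b i) * Uᴴ := by
  rw [← diagonal_mul_diagonal]
  calc _ = U * diagonal a * (Uᴴ * U) * diagonal b * Uᴴ := by simp only [Matrix.mul_assoc]
    _ = _ := by rw [hU, Matrix.mul_one]; simp only [Matrix.mul_assoc]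

lemma conj_diagonal_conjTranspose (U : Matrix ι ι ℂ) (a : ι → ℝ) :
    (U * diagonal (fun i => (a i : ℂ)) * Uᴴ)ᴴ = U * diagonal (fun i => (a i : ℂ)) * Uᴴ := by
  simp only [conjTranspose_mul, conjTranspose_conjTranspose, diagonal_conjTranspose,
    Matrix.mul_assoc]
  congr 3
  ext i
  simp

lemma posSemidef_conj_diagonal (U : Matrix ι ι ℂ) {a : ι → ℝ} (ha : ∀ i, 0 ≤ a i) :
    (U * diagonal (fun i => (a i : ℂ)) * Uᴴ).PosSemidef :=
  (PosSemidef.diagonal fun i => by simpa using ha i).mul_mul_conjTranspose_same U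

/-- Every positive semidefinite matrix has a positive semidefinite square root. -/
lemma Matrix.PosSemidef.exists_sqrt {A : Matrix ι ι ℂ} (hA : A.PosSemidef) :
    ∃ S : Matrix ι ι ℂ, S.PosSemidef ∧ S * S = A := by
  obtain ⟨U, d, hd, hU, -, rfl⟩ := hA.exists_unitary_diagonalization
  refine ⟨U * diagonal (fun i => ((√(d i) : ℝ) : ℂ)) * Uᴴ,
    posSemidef_conj_diagonal U fun i => Real.sqrt_nonneg _, ?_⟩
  rw [conj_diagonal_mul hU]
  congr 3
  ext i
  rw [← Complex.ofReal_mul, Real.mul_self_sqrt (hd i)]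

/-- Polar decomposition: `M Xᴴ` is a positive square root of `M Mᴴ` for some contraction `X`. -/
lemma exists_polar_contraction (M : Matrix ι κ ℂ) :
    ∃ (S : Matrix ι ι ℂ) (X : Matrix ι κ ℂ), S.PosSemidef ∧ S * S = M * Mᴴ ∧ M * Xᴴ = S ∧
      (1 - Xᴴ * X).PosSemidef := by
  obtain ⟨U, d, hd, hU, -, hM⟩ :=
    (posSemidef_self_mul_conjTranspose M).exists_unitary_diagonalization
  set s : ι → ℝ := fun i => √(d i) with hs
  have hss : ∀ i, d i = s i * s i := fun i => (Real.mul_self_sqrt (hd i)).symm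
  set S := U * diagonal (fun i => (s i : ℂ)) * Uᴴ with hS
  set T := U * diagonal (fun i => ((s i)⁻¹ : ℝ) : ι → ℂ) * Uᴴ with hT
  have hTh : Tᴴ = T := conj_diagonal_conjTranspose U _
  have hMT : M * Mᴴ * T = S := by
    rw [hM, hT, conj_diagonal_mul hU]
    congr 3
    ext i
    rw [← Complex.ofReal_mul, hss, mul_self_mul_inv]
  have hTST : T * S * T = T := by
    rw [hS, hT, conj_diagonal_mul hU, conj_diagonal_mul hU]
    congr 3
    ext i
    rw [← Complex.ofReal_mul, ← Complex.ofReal_mul]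
    by_cases h : s i = 0
    · simp [h]
    · rw [inv_mul_cancel₀ h, one_mul]
  have hXS : M * (T * M)ᴴ = S := by
    rw [conjTranspose_mul, hTh, ← Matrix.mul_assoc, hMT]
  refine ⟨S, T * M, posSemidef_conj_diagonal U fun i => Real.sqrt_nonneg _, ?_, hXS, ?_⟩
  · rw [hM, hS, conj_diagonal_mul hU]
    congr 3
    ext i
    rw [← Complex.ofReal_mul, hss]
  · set X := T * M with hX
    have hXX : X * Xᴴ * X = X := by
      calc X * Xᴴ * X = T * (M * Xᴴ) * T * M := by simp only [hX, Matrix.mul_assoc]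
        _ = X := by rw [hXS, hTST]
    have hproj : (1 - Xᴴ * X)ᴴ * (1 - Xᴴ * X) = 1 - Xᴴ * X := by
      have h2 : Xᴴ * X * (Xᴴ * X) = Xᴴ * X := by
        calc _ = Xᴴ * (X * Xᴴ * X) := by simp only [Matrix.mul_assoc]
          _ = _ := by rw [hXX]
      simp only [conjTranspose_sub, conjTranspose_one, conjTranspose_mul,
        conjTranspose_conjTranspose, Matrix.sub_mul, Matrix.mul_sub, Matrix.one_mul,
        Matrix.mul_one, h2]
      abel
    rw [← hproj]
    exact posSemidef_conjTranspose_mul_self _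

/-- The Powers–Størmer inequality, with the trace norm of the difference of squares replaced by
the trace against a unitary. -/
lemma exists_unitary_sum_norm_sq_sub_le {S T : Matrix ι ι ℂ} (hS : S.PosSemidef)
    (hT : T.PosSemidef) :
    ∃ G : Matrix ι ι ℂ, Gᴴ * G = 1 ∧
      ∑ i, ∑ j, ‖(S - T) i j‖ ^ 2 ≤ (G * (S * S - T * T)).trace.re := by
  obtain ⟨U, d, hU, hU', hd⟩ := exists_unitary_diagonalization (hS.1.sub hT.1)
  set e : ι → ℝ := fun i => if 0 ≤ d i then 1 else -1 with he
  have hee : ∀ i, e i * e i = 1 := fun i => by simp only [he]; split_ifs <;> norm_num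
  refine ⟨U * diagonal (fun i => (e i : ℂ)) * Uᴴ, ?_, ?_⟩
  · rw [conj_diagonal_conjTranspose, conj_diagonal_mul hU]
    simp only [← Complex.ofReal_mul, hee, Complex.ofReal_one, diagonal_one, Matrix.mul_one, hU']
  set T' := Uᴴ * T * U with hT'
  have hT'p : T'.PosSemidef := hT.conjTranspose_mul_mul_same U
  have hS'p : (Uᴴ * S * U).PosSemidef := hS.conjTranspose_mul_mul_same U
  set D : Matrix ι ι ℂ := diagonal (fun i => (d i : ℂ)) with hD
  have hSe : S = U * (T' + D) * Uᴴ := by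
    have h1 : U * T' * Uᴴ = T := by
      calc _ = (U * Uᴴ) * T * (U * Uᴴ) := by simp only [hT', Matrix.mul_assoc]
        _ = T := by rw [hU', Matrix.one_mul, Matrix.mul_one]
    rw [Matrix.mul_add, Matrix.add_mul, h1, ← hd]
    abel
  have hS'e : Uᴴ * S * U = T' + D := by
    calc _ = (Uᴴ * U) * (T' + D) * (Uᴴ * U) := by rw [hSe]; simp only [Matrix.mul_assoc]
      _ = _ := by rw [hU, Matrix.one_mul, Matrix.mul_one]
  have hsq : Uᴴ * (S * S - T * T) * U = T' * D + D * T' + D * D := by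
    have h1 : Uᴴ * (S * S) * U = (T' + D) * (T' + D) := by
      rw [← hS'e]
      calc _ = Uᴴ * S * 1 * S * U := by simp only [Matrix.mul_assoc, Matrix.one_mul]
        _ = _ := by rw [← hU']; simp only [Matrix.mul_assoc]
    have h2 : Uᴴ * (T * T) * U = T' * T' := by
      rw [hT']
      calc _ = Uᴴ * T * 1 * T * U := by simp only [Matrix.mul_assoc, Matrix.one_mul]
        _ = _ := by rw [← hU']; simp only [Matrix.mul_assoc]
    rw [Matrix.mul_sub, Matrix.sub_mul, h1, h2, Matrix.add_mul, Matrix.mul_add, Matrix.mul_add]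
    abel
  have hR : (U * diagonal (fun i => (e i : ℂ)) * Uᴴ * (S * S - T * T)).trace.re
      = ∑ i, e i * d i * ((T' i i).re + ((T' + D) i i).re) := by
    have : (U * diagonal (fun i => (e i : ℂ)) * Uᴴ * (S * S - T * T)).trace
        = (diagonal (fun i => (e i : ℂ)) * (T' * D + D * T' + D * D)).trace := by
      rw [← hsq, Matrix.mul_assoc, Matrix.mul_assoc, Matrix.trace_mul_comm U]
      simp only [Matrix.mul_assoc]
    rw [this]
    simp only [Matrix.trace, Complex.re_sum, Matrix.diag_apply]
    refine Finset.sum_congr rfl fun i _ => ?_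
    simp only [hD, Matrix.diagonal_mul, Matrix.mul_diagonal, Matrix.add_apply,
      Matrix.diagonal_apply_eq]
    simp
    ring
  have hL : ∑ i, ∑ j, ‖(S - T) i j‖ ^ 2 = ∑ i, d i * d i := by
    rw [← re_trace_conjTranspose_mul_self, hd, conj_diagonal_conjTranspose, conj_diagonal_mul hU,
      Matrix.mul_assoc, Matrix.trace_mul_comm, Matrix.mul_assoc, hU, Matrix.mul_one]
    simp [Matrix.trace]
  rw [hR, hL]
  refine Finset.sum_le_sum fun i _ => ?_
  have h1 : 0 ≤ (T' i i).re := (Complex.le_def.1 hT'p.diag_nonneg).1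
  have h2 : 0 ≤ ((T' + D) i i).re := by
    rw [← hS'e]
    exact (Complex.le_def.1 hS'p.diag_nonneg).1
  have h3 : ((T' + D) i i).re = (T' i i).re + d i := by simp [hD]
  simp only [he]
  split_ifs with h
  · nlinarith
  · nlinarith

/-- The trace norm dominates the trace against any unitary. -/
lemma re_trace_unitary_mul_le_traceNorm {G : Matrix ι ι ℂ} (hG : Gᴴ * G = 1)
    (A : Matrix ι ι ℂ) : (G * A).trace.re ≤ traceNorm A := by
  have hQ := posSemidef_conjTranspose_mul_self A
  rw [traceNorm, psdSqrt, dif_pos hQ]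
  set U : Matrix ι ι ℂ := hQ.1.eigenvectorUnitary.1
  have hU : Uᴴ * U = 1 := Unitary.coe_star_mul_self hQ.1.eigenvectorUnitary
  have hU' : U * Uᴴ = 1 := Unitary.coe_mul_star_self hQ.1.eigenvectorUnitary
  have hspec : Aᴴ * A = U * diagonal (fun i => (hQ.1.eigenvalues i : ℂ)) * Uᴴ := by
    conv_lhs => rw [hQ.1.spectral_theorem]
    rfl
  set d := hQ.1.eigenvalues with hd
  have hR : (U * diagonal (fun i => ((√(d i) : ℝ) : ℂ)) * star U).trace.re = ∑ i, √(d i) := by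
    rw [star_eq_conjTranspose, Matrix.mul_assoc, Matrix.trace_mul_comm, Matrix.mul_assoc, hU,
      Matrix.mul_one]
    simp [Matrix.trace]
  rw [show (star hQ.1.eigenvectorUnitary : Matrix ι ι ℂ) = star U from rfl, hR]
  have hL : (G * A).trace = (Uᴴ * (G * A * U)).trace := by
    rw [Matrix.trace_mul_comm Uᴴ, Matrix.mul_assoc, hU', Matrix.mul_one]
  rw [hL]
  simp only [Matrix.trace, Complex.re_sum, Matrix.diag_apply]
  refine Finset.sum_le_sum fun i _ => ?_
  have hcol : ∀ B : Matrix ι ι ℂ, ∑ j, ‖B j i‖ ^ 2 = ((Bᴴ * B) i i).re := fun B => by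
    simp only [Matrix.mul_apply, conjTranspose_apply, Complex.re_sum]
    refine Finset.sum_congr rfl fun j _ => ?_
    rw [← Complex.normSq_eq_norm_sq, Complex.normSq_apply]
    simp
  have hGA : (G * A * U)ᴴ * (G * A * U) = diagonal (fun i => (d i : ℂ)) := by
    calc _ = Uᴴ * (Aᴴ * ((Gᴴ * G) * A)) * U := by
          simp only [conjTranspose_mul, Matrix.mul_assoc]
      _ = (Uᴴ * U) * diagonal (fun i => (d i : ℂ)) * (Uᴴ * U) := by
          rw [hG, Matrix.one_mul, hspec]; simp only [Matrix.mul_assoc]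
      _ = _ := by rw [hU, Matrix.one_mul, Matrix.mul_one]
  have h1 : ∑ j, ‖U j i‖ ^ 2 = 1 := by rw [hcol, hU]; simp
  have h2 : ∑ j, ‖(G * A * U) j i‖ ^ 2 = d i := by rw [hcol, hGA]; simp
  calc ((Uᴴ * (G * A * U)) i i).re ≤ ‖(Uᴴ * (G * A * U)) i i‖ := Complex.re_le_norm _
    _ ≤ ∑ j, ‖U j i‖ * ‖(G * A * U) j i‖ := by
        rw [Matrix.mul_apply]
        refine (norm_sum_le _ _).trans_eq (Finset.sum_congr rfl fun j _ => ?_)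
        rw [norm_mul, conjTranspose_apply, norm_star]
    _ ≤ √(∑ j, ‖U j i‖ ^ 2) * √(∑ j, ‖(G * A * U) j i‖ ^ 2) :=
        Real.sum_mul_le_sqrt_mul_sqrt _ _ _
    _ = √(d i) := by rw [h1, h2, Real.sqrt_one, one_mul]

end SpectralCalculus

section ParityCharacter

/-- The real character `(-1)^a` of `ZMod 2`, with complex values. -/
noncomputable def paritySign (a : ZMod 2) : ℂ := (-1 : ℂ) ^ a.val

@[simp] lemma paritySign_zero : paritySign 0 = 1 := by simp [paritySign]

@[simp] lemma paritySign_one : paritySign 1 = -1 := by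
  have : (1 : ZMod 2).val = 1 := rfl
  simp [paritySign, this]

lemma zmod_two_eq_zero_or_one (a : ZMod 2) : a = 0 ∨ a = 1 := by
  revert a
  decide

lemma paritySign_add (a b : ZMod 2) : paritySign (a + b) = paritySign a * paritySign b := by
  rcases zmod_two_eq_zero_or_one a with rfl | rfl <;>
    rcases zmod_two_eq_zero_or_one b with rfl | rfl <;>
    simp [CharTwo.add_self_eq_zero]

lemma paritySign_mul_self (a : ZMod 2) : paritySign a * paritySign a = 1 := by
  rw [← paritySign_add, CharTwo.add_self_eq_zero, paritySign_zero]

lemma conj_paritySign (a : ZMod 2) : (starRingEnd ℂ) (paritySign a) = paritySign a := by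
  simp [paritySign]

variable {n ℓ : ℕ}

lemma xVecV_eq (x z : Fin n → ZMod 2) :
    xVecV n x z = paritySign (x ⬝ᵥ z) / (Real.sqrt (2 ^ n) : ℂ) := rfl

lemma conj_xVecV (x z : Fin n → ZMod 2) : (starRingEnd ℂ) (xVecV n x z) = xVecV n x z := by
  rw [xVecV_eq, map_div₀, conj_paritySign, Complex.conj_ofReal]

lemma xVecV_mul_xVecV (x z z' : Fin n → ZMod 2) :
    xVecV n x z * xVecV n x z' = ((2 : ℂ) ^ n)⁻¹ * paritySign (x ⬝ᵥ (z + z')) := by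
  rw [xVecV_eq, xVecV_eq, dotProduct_add, paritySign_add, div_mul_div_comm,
    ← Complex.ofReal_mul, Real.mul_self_sqrt (by positivity)]
  push_cast
  ring

lemma dotProduct_adjLin (g : (Fin n → ZMod 2) →ₗ[ZMod 2] (Fin ℓ → ZMod 2))
    (x : Fin n → ZMod 2) (c : Fin ℓ → ZMod 2) : x ⬝ᵥ adjLin g c = g x ⬝ᵥ c := by
  have hg : g x = LinearMap.toMatrix' g *ᵥ x := by
    rw [← Matrix.toLin'_apply, Matrix.toLin'_toMatrix']
  rw [adjLin, Matrix.toLin'_apply, Matrix.mulVec_transpose, dotProduct_comm,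
    ← Matrix.dotProduct_mulVec, dotProduct_comm, hg]

/-- A vector orthogonal to `ker g` lies in the range of the adjoint of `g`. -/
lemma mem_range_adjLin (g : (Fin n → ZMod 2) →ₗ[ZMod 2] (Fin ℓ → ZMod 2))
    {w : Fin n → ZMod 2} (hw : ∀ x, g x = 0 → x ⬝ᵥ w = 0) :
    w ∈ LinearMap.range (adjLin g) := by
  have hmem : dotProductEquiv (ZMod 2) (Fin n) w ∈ (LinearMap.ker g).dualAnnihilator := by
    rw [Submodule.mem_dualAnnihilator]
    intro x hx
    rw [dotProductEquiv_apply_apply, dotProduct_comm]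
    exact hw x hx
  rw [← LinearMap.range_dualMap_eq_dualAnnihilator_ker] at hmem
  obtain ⟨η, hη⟩ := hmem
  obtain ⟨c, rfl⟩ := (dotProductEquiv (ZMod 2) (Fin ℓ)).surjective η
  refine ⟨c, ?_⟩
  refine dotProduct_eq _ _ fun x => ?_
  have := LinearMap.congr_fun hη x
  rw [LinearMap.dualMap_apply, dotProductEquiv_apply_apply, dotProductEquiv_apply_apply] at this
  rw [dotProduct_comm, dotProduct_adjLin, dotProduct_comm, this]

lemma card_fiber_mul (g : (Fin n → ZMod 2) →ₗ[ZMod 2] (Fin ℓ → ZMod 2))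
    (hg : Function.Surjective g) (k : Fin ℓ → ZMod 2) :
    #{x | g x = k} * 2 ^ ℓ = 2 ^ n := by
  have hfib : ∀ k', #{x | g x = k'} = #{x | g x = k} := fun k' =>
    AddMonoidHom.card_fiber_eq_of_mem_range g.toAddMonoidHom (hg k') (hg k)
  have := Finset.card_eq_sum_card_fiberwise (f := g) (s := Finset.univ) (t := Finset.univ)
    (by simp)
  simp only [hfib, Finset.sum_const, Finset.card_univ, Fintype.card_fun, ZMod.card,
    Fintype.card_fin, smul_eq_mul] at this
  rw [this, mul_comm]

/-- Character sum over a fibre of `g`. -/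
lemma sum_fiber_paritySign (g : (Fin n → ZMod 2) →ₗ[ZMod 2] (Fin ℓ → ZMod 2))
    (hg : Function.Surjective g) (y w : Fin n → ZMod 2) :
    ((2 : ℂ) ^ n)⁻¹ * ∑ x with g x = g y, paritySign (x ⬝ᵥ w)
      = if w ∈ LinearMap.range (adjLin g) then ((2 : ℂ) ^ ℓ)⁻¹ * paritySign (y ⬝ᵥ w) else 0 := by
  split_ifs with hw
  · obtain ⟨c, rfl⟩ := hw
    have hconst : ∀ x ∈ ({x | g x = g y} : Finset (Fin n → ZMod 2)),
        paritySign (x ⬝ᵥ adjLin g c) = paritySign (y ⬝ᵥ adjLin g c) := fun x hx => by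
      rw [dotProduct_adjLin, dotProduct_adjLin, (Finset.mem_filter.1 hx).2]
    rw [Finset.sum_congr rfl hconst, Finset.sum_const, nsmul_eq_mul, ← mul_assoc]
    congr 1
    have : (#{x | g x = g y} : ℂ) * 2 ^ ℓ = 2 ^ n := by
      exact_mod_cast card_fiber_mul g hg (g y)
    rw [← this, mul_inv, mul_comm, ← mul_assoc, mul_inv_cancel₀, one_mul]
    intro h0
    rw [h0, zero_mul] at this
    exact pow_ne_zero n two_ne_zero this.symm
  · have hx : ∃ x₀, g x₀ = 0 ∧ x₀ ⬝ᵥ w ≠ 0 := by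
      by_contra! h
      exact hw (mem_range_adjLin g h)
    obtain ⟨x₀, hx₀, hne⟩ := hx
    have h1 : x₀ ⬝ᵥ w = 1 := (zmod_two_eq_zero_or_one _).resolve_left hne
    have hneg : ∑ x with g x = g y, paritySign (x ⬝ᵥ w)
        = ∑ x with g x = g y, -paritySign (x ⬝ᵥ w) := by
      refine Finset.sum_bij (fun x _ => x + x₀) ?_ ?_ ?_ ?_
      · simp [hx₀]
      · simp
      · intro x hx
        exact ⟨x - x₀, by simpa [hx₀] using hx, by simp⟩
      · intro x _
        simp [add_dotProduct, paritySign_add, h1]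
    rw [Finset.sum_neg_distrib] at hneg
    rw [self_eq_neg.1 hneg, mul_zero]

end ParityCharacter

section Pinching

/-- Attach to every row `(z, s)` of `m` the label `f z`, recorded in an extra column register. -/
noncomputable def labelMatrix {α β γ r : Type*} (m : Matrix (α × r) β ℂ) (f : α → γ) : Matrix (α × r) (β × γ) ℂ :=
  Matrix.of fun i j => if f i.1 = j.2 then m i j.1 else 0

/-- The pinching of `ρ` that keeps the entries whose row and column have the same label. -/
noncomputable def pinch {α γ r : Type*} (f : α → γ) (ρ : Matrix (α × r) (α × r) ℂ) : Matrix (α × r) (α × r) ℂ :=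
  Matrix.of fun i j => if f i.1 = f j.1 then ρ i j else 0

lemma labelMatrix_mul_conjTranspose {α β γ r : Type*} [Fintype β] [Fintype γ]
    (m : Matrix (α × r) β ℂ) (f : α → γ) :
    labelMatrix m f * (labelMatrix m f)ᴴ = pinch f (m * mᴴ) := by
  ext i j
  simp only [Matrix.mul_apply, Fintype.sum_prod_type, labelMatrix, pinch, of_apply,
    conjTranspose_apply, ite_mul, zero_mul, Finset.sum_ite_eq, Finset.mem_univ, if_true]
  by_cases h : f i.1 = f j.1
  · simp [h]
  · simp [h, Ne.symm h]

/-- The block-diagonal part of `m mᴴ` has a block-diagonal positive square root. -/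
lemma exists_blockDiagonal_sqrt {α β r : Type*} [Fintype α] [Fintype β] [Fintype r]
    (m : Matrix (α × r) β ℂ) :
    ∃ T : Matrix (α × r) (α × r) ℂ, T.PosSemidef ∧ T * T = pinch id (m * mᴴ) ∧
      ∀ i j, i.1 ≠ j.1 → T i j = 0 := by
  have hblock : ∀ z : α, ∃ A : Matrix r r ℂ, A.PosSemidef ∧
      A * A = m.submatrix (fun s => (z, s)) id * (m.submatrix (fun s => (z, s)) id)ᴴ :=
    fun z => (posSemidef_self_mul_conjTranspose _).exists_sqrt
  choose A hA hAA using hblock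
  choose C hC hCC using fun z => (hA z).exists_sqrt
  have hmul : ∀ P Q : α → Matrix r r ℂ,
      (Matrix.of fun i j : α × r => if i.1 = j.1 then P i.1 i.2 j.2 else 0)
        * (Matrix.of fun i j : α × r => if i.1 = j.1 then Q i.1 i.2 j.2 else 0)
      = Matrix.of fun i j : α × r => if i.1 = j.1 then (P i.1 * Q i.1) i.2 j.2 else 0 := by
    intro P Q
    ext i j
    by_cases h : i.1 = j.1
    · simp [Matrix.mul_apply, Fintype.sum_prod_type_right, h]
    · simp +contextual [Matrix.mul_apply, h]
  refine ⟨Matrix.of fun i j => if i.1 = j.1 then A i.1 i.2 j.2 else 0, ?_, ?_, ?_⟩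
  · have hCh : (Matrix.of fun i j : α × r => if i.1 = j.1 then C i.1 i.2 j.2 else 0)ᴴ
        = Matrix.of fun i j : α × r => if i.1 = j.1 then C i.1 i.2 j.2 else 0 := by
      ext i j
      simp only [conjTranspose_apply, of_apply]
      by_cases h : i.1 = j.1
      · rw [if_pos h, if_pos h.symm, ← h]
        exact (hC i.1).1.apply _ _
      · rw [if_neg h, if_neg (Ne.symm h), star_zero]
    have := posSemidef_conjTranspose_mul_self
      (Matrix.of fun i j : α × r => if i.1 = j.1 then C i.1 i.2 j.2 else 0)
    rw [hCh, hmul] at this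
    simpa only [hCC] using this
  · rw [hmul]
    ext i j
    simp only [hAA, pinch, of_apply, id]
    split_ifs with h
    · obtain ⟨z, s⟩ := i
      obtain ⟨z', s'⟩ := j
      obtain rfl : z = z' := h
      simp [Matrix.mul_apply]
    · rfl
  · intro i j h
    simp [h]

/-- Guessing `z` from its label `f z` and the `B`-part of the pure state with amplitudes `m` fails
with probability at most the trace of the difference of two pinchings against some unitary. -/
lemma exists_povm_guess {α β γ r : Type*} [Fintype α] [Fintype β] [DecidableEq β] [Fintype γ]
    [Fintype r] (z₀ : α) (m : Matrix (α × r) β ℂ)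
    (hm : ∑ i, ∑ b, ‖m i b‖ ^ 2 = 1) (f : α → γ) :
    ∃ (G : Matrix (α × r) (α × r) ℂ) (Λ : γ → α → Matrix β β ℂ), Gᴴ * G = 1 ∧
      (∀ c z, (Λ c z).PosSemidef) ∧ (∀ c, ∑ z, Λ c z = 1) ∧
      1 - (G * (pinch f (m * mᴴ) - pinch id (m * mᴴ))).trace.re
        ≤ (∑ z, ∑ s, star (m (z, s)) ⬝ᵥ (Λ (f z) z *ᵥ m (z, s))).re := by
  obtain ⟨S, X, hS, hSS, hMX, hX⟩ := exists_polar_contraction (labelMatrix m f)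
  obtain ⟨T, hT, hTT, hT0⟩ := exists_blockDiagonal_sqrt m
  obtain ⟨G, hG, hGle⟩ := exists_unitary_sum_norm_sq_sub_le hS hT
  rw [labelMatrix_mul_conjTranspose] at hSS
  rw [hSS, hTT] at hGle
  set Y : γ → α → Matrix β r ℂ := fun c z => Matrix.of fun b s => X (z, s) (b, c) with hY
  have hrest : ∀ c, (1 - ∑ z, Y c z * (Y c z)ᴴ).PosSemidef := by
    intro c
    have h : 1 - ∑ z, Y c z * (Y c z)ᴴ
        = ((1 - Xᴴ * X).submatrix (fun b : β => (b, c)) (fun b : β => (b, c)))ᵀ := by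
      ext b b'
      simp only [hY, Matrix.sub_apply, Matrix.sum_apply, Matrix.mul_apply, of_apply,
        conjTranspose_apply, transpose_apply, submatrix_apply, Fintype.sum_prod_type, one_apply,
        Prod.mk.injEq, and_true]
      congr 1
      · exact if_congr eq_comm rfl rfl
      · exact Finset.sum_congr rfl fun z _ => Finset.sum_congr rfl fun s _ => mul_comm _ _
    rw [h]
    exact (hX.submatrix _).transpose
  have hΛ : ∀ c z,
      ((if z = z₀ then 1 - ∑ z, Y c z * (Y c z)ᴴ else 0) : Matrix β β ℂ).PosSemidef := by
    intro c z
    split_ifs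
    · exact hrest c
    · exact PosSemidef.zero
  refine ⟨G, fun c z => Y c z * (Y c z)ᴴ + if z = z₀ then 1 - ∑ z, Y c z * (Y c z)ᴴ else 0,
    hG, fun c z => (posSemidef_self_mul_conjTranspose _).add (hΛ c z), fun c => ?_, ?_⟩
  · simp [Finset.sum_add_distrib]
  have hYm : ∀ z s, star (m (z, s)) ⬝ᵥ ((Y (f z) z * (Y (f z) z)ᴴ) *ᵥ m (z, s))
      = ((∑ s', ‖S (z, s) (z, s')‖ ^ 2 : ℝ) : ℂ) := by
    intro z s
    have hent : ((Y (f z) z)ᴴ *ᵥ m (z, s)) = fun s' => S (z, s) (z, s') := by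
      ext s'
      rw [← hMX]
      simp only [mulVec, dotProduct, Matrix.mul_apply, Fintype.sum_prod_type, labelMatrix, hY,
        of_apply, conjTranspose_apply, ite_mul, zero_mul, Finset.sum_ite_eq, Finset.mem_univ,
        if_true]
      exact Finset.sum_congr rfl fun b _ => mul_comm _ _
    rw [← mulVec_mulVec, dotProduct_mulVec, ← conjTranspose_conjTranspose (Y (f z) z),
      ← star_mulVec, conjTranspose_conjTranspose, hent]
    simp only [dotProduct, Pi.star_apply, Complex.ofReal_sum]
    refine Finset.sum_congr rfl fun s' _ => ?_
    rw [Complex.star_def, Complex.conj_mul']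
    push_cast
    rfl
  have hlow : ∑ z, ∑ s, ∑ s', ‖S (z, s) (z, s')‖ ^ 2
      ≤ (∑ z, ∑ s, star (m (z, s)) ⬝ᵥ ((Y (f z) z * (Y (f z) z)ᴴ +
        if z = z₀ then 1 - ∑ z', Y (f z) z' * (Y (f z) z')ᴴ else 0) *ᵥ m (z, s))).re := by
    simp only [Complex.re_sum]
    refine Finset.sum_le_sum fun z _ => Finset.sum_le_sum fun s _ => ?_
    rw [add_mulVec, dotProduct_add, hYm, Complex.add_re, Complex.ofReal_re]
    exact le_add_of_nonneg_right
      (Complex.le_def.1 ((hΛ (f z) z).dotProduct_mulVec_nonneg (m (z, s)))).1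
  refine le_trans ?_ hlow
  have htot : ∑ i, ∑ j, ‖S i j‖ ^ 2 = 1 := by
    rw [← re_trace_conjTranspose_mul_self, hS.1, hSS, ← hm]
    have : (pinch f (m * mᴴ)).trace = (m * mᴴ).trace := by simp [Matrix.trace, pinch]
    rw [this, Matrix.trace_mul_comm, re_trace_conjTranspose_mul_self]
  have hsplit : ∑ i, ∑ j, ‖S i j‖ ^ 2 - ∑ z, ∑ s, ∑ s', ‖S (z, s) (z, s')‖ ^ 2
      ≤ ∑ i, ∑ j, ‖(S - T) i j‖ ^ 2 := by
    have hdiag : ∑ z, ∑ s, ∑ s', ‖S (z, s) (z, s')‖ ^ 2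
        = ∑ i : α × r, ∑ j : α × r, if i.1 = j.1 then ‖S i j‖ ^ 2 else 0 := by
      rw [Fintype.sum_prod_type]
      simp [Fintype.sum_prod_type_right]
    rw [hdiag, ← Finset.sum_sub_distrib]
    refine Finset.sum_le_sum fun i _ => ?_
    rw [← Finset.sum_sub_distrib]
    refine Finset.sum_le_sum fun j _ => ?_
    by_cases h : i.1 = j.1
    · rw [if_pos h, sub_self]
      positivity
    · rw [if_neg h, sub_zero, Matrix.sub_apply, hT0 i j h, sub_zero]
  linarith

end Pinching

section HashedKey

variable {n ℓ : ℕ} {β r : Type*} [Fintype β] [Fintype r]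

/-- The block-diagonal matrix whose `k`-th block is `A` conjugated by the phase flip
`|z⟩ ↦ (-1)^⟨y k, z⟩ |z⟩`. -/
noncomputable def phaseTwist {κ r : Type*} (y : κ → Fin n → ZMod 2)
    (A : Matrix ((Fin n → ZMod 2) × r) ((Fin n → ZMod 2) × r) ℂ) :
    Matrix (κ × (Fin n → ZMod 2) × r) (κ × (Fin n → ZMod 2) × r) ℂ :=
  Matrix.of fun a b =>
    if a.1 = b.1 then paritySign (y a.1 ⬝ᵥ (a.2.1 + b.2.1)) * A a.2 b.2 else 0

lemma phaseTwist_mul {κ r : Type*} [Fintype κ] [Fintype r] (y : κ → Fin n → ZMod 2)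
    (A B : Matrix ((Fin n → ZMod 2) × r) ((Fin n → ZMod 2) × r) ℂ) :
    phaseTwist y A * phaseTwist y B = phaseTwist y (A * B) := by
  ext ⟨k, i⟩ ⟨k', j⟩
  rw [Matrix.mul_apply, Fintype.sum_prod_type]
  by_cases h : k = k'
  · subst h
    rw [Finset.sum_eq_single k (fun q _ hq => by simp [phaseTwist, Ne.symm hq]) (by simp)]
    simp only [phaseTwist, of_apply, if_true, Matrix.mul_apply, Finset.mul_sum]
    refine Finset.sum_congr rfl fun t _ => ?_
    have hsign : paritySign (y k ⬝ᵥ (i.1 + t.1)) * paritySign (y k ⬝ᵥ (t.1 + j.1))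
        = paritySign (y k ⬝ᵥ (i.1 + j.1)) := by
      simp only [dotProduct_add, paritySign_add]
      linear_combination paritySign (y k ⬝ᵥ i.1) * paritySign (y k ⬝ᵥ j.1) *
        paritySign_mul_self (y k ⬝ᵥ t.1)
    rw [← hsign]
    ring
  · simp only [phaseTwist, of_apply, if_neg h]
    refine Finset.sum_eq_zero fun q _ => Finset.sum_eq_zero fun t _ => ?_
    by_cases hq : k = q
    · rw [if_neg (fun hq' => h (hq.trans hq')), mul_zero]
    · rw [if_neg hq, zero_mul]

lemma phaseTwist_conjTranspose {κ r : Type*} (y : κ → Fin n → ZMod 2)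
    (A : Matrix ((Fin n → ZMod 2) × r) ((Fin n → ZMod 2) × r) ℂ) :
    (phaseTwist y A)ᴴ = phaseTwist y Aᴴ := by
  ext ⟨k, i⟩ ⟨k', j⟩
  simp only [phaseTwist, conjTranspose_apply, of_apply]
  by_cases h : k = k'
  · subst h
    rw [if_pos rfl, if_pos rfl, star_mul', Complex.star_def, conj_paritySign, add_comm]
  · rw [if_neg h, if_neg (Ne.symm h), star_zero]

lemma phaseTwist_one {κ r : Type*} [DecidableEq κ] [DecidableEq r] (y : κ → Fin n → ZMod 2) :
    phaseTwist y (1 : Matrix ((Fin n → ZMod 2) × r) ((Fin n → ZMod 2) × r) ℂ) = 1 := by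
  ext ⟨k, i⟩ ⟨k', j⟩
  by_cases h : k = k' <;> by_cases h' : i = j <;>
    simp [phaseTwist, one_apply, h, h', CharTwo.add_self_eq_zero]

lemma trace_phaseTwist {κ r : Type*} [Fintype κ] [Fintype r] (y : κ → Fin n → ZMod 2)
    (A : Matrix ((Fin n → ZMod 2) × r) ((Fin n → ZMod 2) × r) ℂ) :
    (phaseTwist y A).trace = Fintype.card κ * A.trace := by
  simp [Matrix.trace, phaseTwist, Fintype.sum_prod_type, CharTwo.add_self_eq_zero]

lemma keyState_sub_idealKeyV {ψ : (Fin n → ZMod 2) × β × ((Fin n → ZMod 2) × r) → ℂ}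
    {m : Matrix ((Fin n → ZMod 2) × r) β ℂ}
    (hψ : ∀ a b i, ψ (a, b, i) = if i.1 = a then m i b else 0)
    {g : (Fin n → ZMod 2) →ₗ[ZMod 2] (Fin ℓ → ZMod 2)} (hg : Function.Surjective g)
    {fp : (Fin n → ZMod 2) →ₗ[ZMod 2] (Fin (n - ℓ) → ZMod 2)}
    (hker : LinearMap.ker fp = LinearMap.range (adjLin g))
    {y : (Fin ℓ → ZMod 2) → Fin n → ZMod 2} (hy : ∀ k, g (y k) = k) :
    keyState ψ g - idealKeyV ℓ ψ
      = ((2 : ℂ) ^ ℓ)⁻¹ • phaseTwist y (pinch fp (m * mᴴ) - pinch id (m * mᴴ)) := by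
  have hcond : ∀ x b i, condVecXV ψ x (b, i) = xVecV n x i.1 * m i b := fun x b i => by
    simp [condVecXV, hψ, conj_xVecV]
  have htheta : ∀ x i j, thetaRV ψ x i j
      = ((2 : ℂ) ^ n)⁻¹ * paritySign (x ⬝ᵥ (i.1 + j.1)) * (m * mᴴ) i j := fun x i j => by
    rw [← xVecV_mul_xVecV, Matrix.mul_apply, Finset.mul_sum]
    simp only [thetaRV, of_apply, hcond, map_mul, conj_xVecV, conjTranspose_apply,
      Complex.star_def]
    exact Finset.sum_congr rfl fun b _ => by ring
  have hred : ∀ i j, reducedR ψ i j = pinch id (m * mᴴ) i j := fun i j => by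
    simp only [reducedR, of_apply, hψ, pinch, id, Matrix.mul_apply, conjTranspose_apply]
    rw [Finset.sum_eq_single i.1 (fun z _ hz => by simp [Ne.symm hz]) (by simp)]
    by_cases h : i.1 = j.1
    · simp [h]
    · simp [h, Ne.symm h]
  have hmem : ∀ z z', z + z' ∈ LinearMap.range (adjLin g) ↔ fp z = fp z' := fun z z' => by
    rw [← hker, LinearMap.mem_ker, map_add, add_eq_zero_iff_eq_neg, ZModModule.neg_eq_self]
  ext ⟨k, i⟩ ⟨k', j⟩
  simp only [Matrix.sub_apply, Matrix.smul_apply, keyState, idealKeyV, phaseTwist, of_apply,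
    htheta, hred, smul_eq_mul]
  by_cases h : k = k'
  · subst h
    simp only [if_true]
    have hfib := sum_fiber_paritySign g hg (y k) (i.1 + j.1)
    rw [hy] at hfib
    rw [← Finset.sum_mul, ← Finset.mul_sum, hfib]
    simp only [hmem, pinch, of_apply, id]
    by_cases hz : i.1 = j.1
    · simp [hz, CharTwo.add_self_eq_zero]
    · by_cases hf : fp i.1 = fp j.1
      · simp [hz, hf, mul_assoc]
      · simp [hz, hf]
  · simp [h]

lemma re_trace_le_traceNorm_keyState_sub [DecidableEq r]
    {ψ : (Fin n → ZMod 2) × β × ((Fin n → ZMod 2) × r) → ℂ}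
    {m : Matrix ((Fin n → ZMod 2) × r) β ℂ}
    (hψ : ∀ a b i, ψ (a, b, i) = if i.1 = a then m i b else 0)
    {g : (Fin n → ZMod 2) →ₗ[ZMod 2] (Fin ℓ → ZMod 2)} (hg : Function.Surjective g)
    {fp : (Fin n → ZMod 2) →ₗ[ZMod 2] (Fin (n - ℓ) → ZMod 2)}
    (hker : LinearMap.ker fp = LinearMap.range (adjLin g))
    {G : Matrix ((Fin n → ZMod 2) × r) ((Fin n → ZMod 2) × r) ℂ} (hG : Gᴴ * G = 1) :
    (G * (pinch fp (m * mᴴ) - pinch id (m * mᴴ))).trace.re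
      ≤ traceNorm (keyState ψ g - idealKeyV ℓ ψ) := by
  obtain ⟨y, hy⟩ := hg.hasRightInverse
  have hunit : (phaseTwist y G)ᴴ * phaseTwist y G = 1 := by
    rw [phaseTwist_conjTranspose, phaseTwist_mul, hG, phaseTwist_one]
  refine le_of_eq_of_le ?_ (re_trace_unitary_mul_le_traceNorm hunit _)
  rw [keyState_sub_idealKeyV hψ hg hker hy, Matrix.mul_smul, phaseTwist_mul, Matrix.trace_smul,
    trace_phaseTwist]
  simp

end HashedKey

/-- For a state with H(Z^A|R) = 0 (form ∑_z √p_z |z⟩_A ⊗ |φ_z⟩_{BR₂} ⊗ |z⟩_{R₁},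
suitably reordered), if the hashed X-key from a surjective linear extractor g to ℓ bits is
ε-secure against R = R₁R₂, then every surjective linear f⊥ to n−ℓ bits with
ker f⊥ = range gᵀ is a compressor from which, together with B, the Z-outcome is
√(2ε)-recoverable. -/
theorem pa_implies_csi_caseB {n ℓ : ℕ} (hn : 1 ≤ n) (hℓ : ℓ ≤ n)
    {β r₂ : Type*} [Fintype β] [DecidableEq β] [Fintype r₂] [DecidableEq r₂]
    (p : (Fin n → ZMod 2) → ℝ) (hp0 : ∀ z, 0 ≤ p z) (hp1 : ∑ z, p z = 1)
    (φ : (Fin n → ZMod 2) → β × r₂ → ℂ) (hφ : ∀ z, ∑ t, ‖φ z t‖ ^ 2 = 1)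
    (ψ : (Fin n → ZMod 2) × β × ((Fin n → ZMod 2) × r₂) → ℂ)
    (hform : ∀ a b k s, ψ (a, b, (k, s))
        = (Real.sqrt (p a) : ℂ) * (if k = a then 1 else 0) * φ a (b, s))
    (g : ((Fin n → ZMod 2)) →ₗ[ZMod 2] (Fin ℓ → ZMod 2)) (hg : Function.Surjective g)
    (ε : ℝ) (hε0 : 0 ≤ ε) (hε1 : ε ≤ 1)
    (hsec : traceDist (keyState ψ g) (idealKeyV ℓ ψ) ≤ ε) :
    ∀ fp : ((Fin n → ZMod 2)) →ₗ[ZMod 2] (Fin (n - ℓ) → ZMod 2),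
      Function.Surjective fp → LinearMap.ker fp = LinearMap.range (adjLin g) →
      ∃ Λ : (Fin (n - ℓ) → ZMod 2) → (Fin n → ZMod 2) → Matrix β β ℂ,
        (∀ c z, (Λ c z).PosSemidef) ∧ (∀ c, ∑ z, Λ c z = 1) ∧
        1 - Real.sqrt (2 * ε) ≤ (∑ z, ∑ b, ∑ b', ∑ s,
          (starRingEnd ℂ) (ψ (z, b, s)) * Λ (fp z) z b b' * ψ (z, b', s)).re := by
  intro fp hfp hker
  set m : Matrix ((Fin n → ZMod 2) × r₂) β ℂ :=
    Matrix.of fun i b => (Real.sqrt (p i.1) : ℂ) * φ i.1 (b, i.2) with hm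
  have hψ : ∀ a b i, ψ (a, b, i) = if i.1 = a then m i b else 0 := by
    rintro a b ⟨k, s⟩
    rw [hform]
    by_cases h : k = a
    · subst h
      simp [hm]
    · simp [h]
  have hnorm : ∑ i, ∑ b, ‖m i b‖ ^ 2 = 1 := by
    rw [← hp1, Fintype.sum_prod_type]
    refine Finset.sum_congr rfl fun z _ => ?_
    rw [← mul_one (p z), ← hφ z, Fintype.sum_prod_type_right, Finset.mul_sum]
    refine Finset.sum_congr rfl fun s _ => ?_
    rw [Finset.mul_sum]
    refine Finset.sum_congr rfl fun b _ => ?_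
    rw [hm, of_apply, norm_mul, mul_pow, Complex.norm_real, Real.norm_eq_abs, sq_abs,
      Real.sq_sqrt (hp0 z)]
  obtain ⟨G, Λ, hG, hΛ, hΛsum, hguess⟩ := exists_povm_guess 0 m hnorm fp
  have hsucc : ∑ z, ∑ b, ∑ b', ∑ s,
      (starRingEnd ℂ) (ψ (z, b, s)) * Λ (fp z) z b b' * ψ (z, b', s)
      = ∑ z, ∑ s, star (m (z, s)) ⬝ᵥ (Λ (fp z) z *ᵥ m (z, s)) := by
    refine Finset.sum_congr rfl fun z _ => ?_
    have hsum : ∀ b b', ∑ s, (starRingEnd ℂ) (ψ (z, b, s)) * Λ (fp z) z b b' * ψ (z, b', s)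
        = ∑ s, star (m (z, s) b) * (Λ (fp z) z b b' * m (z, s) b') := fun b b' => by
      simp [hψ, Fintype.sum_prod_type_right, mul_assoc]
    simp only [hsum, dotProduct, mulVec, Finset.mul_sum, Pi.star_apply]
    rw [Finset.sum_comm (s := (Finset.univ : Finset r₂))]
    refine Finset.sum_congr rfl fun b _ => ?_
    rw [Finset.sum_comm]
  refine ⟨Λ, hΛ, hΛsum, ?_⟩
  rw [hsucc]
  have htwo : (G * (pinch fp (m * mᴴ) - pinch id (m * mᴴ))).trace.re ≤ 2 * ε := by
    refine (re_trace_le_traceNorm_keyState_sub hψ hg hker (by convert hG)).trans ?_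
    rw [traceDist] at hsec
    linarith
  have hnonneg : 0 ≤ (∑ z, ∑ s, star (m (z, s)) ⬝ᵥ (Λ (fp z) z *ᵥ m (z, s))).re := by
    simp only [Complex.re_sum]
    exact Finset.sum_nonneg fun z _ => Finset.sum_nonneg fun s _ =>
      (Complex.le_def.1 ((hΛ (fp z) z).dotProduct_mulVec_nonneg (m (z, s)))).1
  rcases le_or_gt (2 * ε) 1 with h | h
  · have : 2 * ε ≤ Real.sqrt (2 * ε) := Real.le_sqrt_of_sq_le (by nlinarith)
    linarith
  · have : 1 ≤ Real.sqrt (2 * ε) := Real.one_le_sqrt.2 h.le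
    linarith
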